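/- For every complex number q with 0 < |q| < 1, one has ∑_{i,j,k,l ≥ 0} q^{i²+j²+k²+l²+il−jl−kl} / ((q²;q²)_i (q²;q²)_j (q²;q²)_k (q²;q²)_l) = J_2⁶ J_14 J_28⁵ / (J_1³ J_4³ J_{2,28} J_{3,28} J_{7,28} J_{8,28} J_{11,28} J_{12,28}) + 4q · J_4³ J_{8,28} / J_2⁴. -/

import Mathlib

open scoped BigOperators

/-- The infinite q-Pochhammer symbol `(a; q)_∞ = ∏_{k=0}^∞ (1 - a q^k)`. -/
noncomputable def qPochInf (a q : ℂ) : ℂ := ∏' n : ℕ, (1 - a * q ^ n)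

/-- The finite q-Pochhammer symbol `(a; q)_n = ∏_{k=0}^{n-1} (1 - a q^k)`. -/
noncomputable def qPoch (a q : ℂ) (n : ℕ) : ℂ :=
  Finset.prod (Finset.range n) (fun k => 1 - a * q ^ k)

/-- `J_m = (q^m; q^m)_∞`. -/
noncomputable def J (q : ℂ) (m : ℕ) : ℂ := qPochInf (q ^ m) (q ^ m)

/-- `J_{a,m} = (q^a; q^m)_∞ (q^{m-a}; q^m)_∞ (q^m; q^m)_∞`. -/
noncomputable def Jam (q : ℂ) (a m : ℕ) : ℂ :=
  qPochInf (q ^ a) (q ^ m) * qPochInf (q ^ (m - a)) (q ^ m) * qPochInf (q ^ m) (q ^ m)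


/-!
For fixed `l`, Euler's theorem evaluates the sums over `i`, `j` and `k` as infinite products. In
the terms with `l = 2m` and `l = 2m + 1` these products are reflected into finite ones, and the two
halves of the remaining sum over `l` become, up to the factors `(-q; q²)_∞³` and
`4q (-q²; q²)_∞³`, the Rogers-type series
`∑ q^(2m²) (-q; q²)_m / (q²; q²)_{2m}` and `∑ q^(2m²+2m) (-q²; q²)_m / (q²; q²)_{2m+1}`.

Both series are values of the weak form of Bailey's lemma at Bailey pairs whose members are theta
terms; such a pair is verified by a telescoping recurrence in the upper index. Jacobi's triple
product then sums the resulting theta series to `(q³, q⁴, q⁷; q⁷)_∞ / (q²; q²)_∞` at `-q` and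
to `J_{8,28} / J_2`, and the former is dissected modulo `28`.
-/

open Filter Topology

/-! ### `q`-Pochhammer symbols -/

section Pochhammer

variable {a q : ℂ}

theorem one_sub_ne_zero_of_norm_lt_one (ha : ‖a‖ < 1) : 1 - a ≠ 0 := by
  rintro h
  rw [← sub_eq_zero.1 h, norm_one] at ha
  exact lt_irrefl _ ha

theorem norm_pow_lt_one (hq : ‖q‖ < 1) {n : ℕ} (hn : n ≠ 0) : ‖q ^ n‖ < 1 := by
  rw [norm_pow]
  exact pow_lt_one₀ (norm_nonneg q) hq hn

theorem summable_norm_neg_mul_pow (a : ℂ) (hq : ‖q‖ < 1) :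
    Summable fun n : ℕ => ‖-(a * q ^ n)‖ := by
  simpa only [norm_neg, norm_mul, norm_pow] using
    (summable_geometric_of_lt_one (norm_nonneg q) hq).mul_left ‖a‖

theorem tendsto_qPoch (a : ℂ) (hq : ‖q‖ < 1) :
    Tendsto (fun n => qPoch a q n) atTop (𝓝 (qPochInf a q)) := by
  simpa only [qPoch, qPochInf, sub_eq_add_neg] using
    (multipliable_one_add_of_summable (summable_norm_neg_mul_pow a hq)).tendsto_prod_tprod_nat

theorem qPochInf_ne_zero (ha : ‖a‖ < 1) (hq : ‖q‖ < 1) : qPochInf a q ≠ 0 := by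
  have hfactor (n : ℕ) : 1 + -(a * q ^ n) ≠ 0 := by
    rw [← sub_eq_add_neg]
    refine one_sub_ne_zero_of_norm_lt_one ?_
    rw [norm_mul, norm_pow]
    exact (mul_le_of_le_one_right (norm_nonneg a) (pow_le_one₀ (norm_nonneg q) hq.le)).trans_lt ha
  simpa only [qPochInf, sub_eq_add_neg] using
    tprod_one_add_ne_zero_of_summable hfactor (summable_norm_neg_mul_pow a hq)

@[simp]
theorem qPoch_zero (a q : ℂ) : qPoch a q 0 = 1 :=
  Finset.prod_range_zero _

theorem qPoch_succ (a q : ℂ) (n : ℕ) : qPoch a q (n + 1) = qPoch a q n * (1 - a * q ^ n) :=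
  Finset.prod_range_succ _ n

theorem qPoch_succ_left (a q : ℂ) (n : ℕ) :
    qPoch a q (n + 1) = (1 - a) * qPoch (a * q) q n := by
  simp only [qPoch, Finset.prod_range_succ', pow_zero, mul_one, pow_succ', mul_assoc]
  exact mul_comm _ _

theorem qPoch_self_ne_zero (hq : ‖q‖ < 1) (n : ℕ) : qPoch q q n ≠ 0 :=
  Finset.prod_ne_zero_iff.2 fun k _ => by
    rw [← pow_succ']
    exact one_sub_ne_zero_of_norm_lt_one (norm_pow_lt_one hq k.succ_ne_zero)

theorem qPochInf_eq_qPoch_mul (a : ℂ) (hq : ‖q‖ < 1) (n : ℕ) :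
    qPochInf a q = qPoch a q n * qPochInf (a * q ^ n) q := by
  have hsplit (N : ℕ) : qPoch a q (n + N) = qPoch a q n * qPoch (a * q ^ n) q N := by
    simp only [qPoch, Finset.prod_range_add, pow_add, mul_assoc]
  refine tendsto_nhds_unique ((tendsto_qPoch a hq).comp (tendsto_add_atTop_nat n)) ?_
  simpa only [Function.comp_def, add_comm _ n, hsplit] using
    (tendsto_qPoch (a * q ^ n) hq).const_mul (qPoch a q n)

theorem qPoch_mul_eq_prod (a q : ℂ) (k N : ℕ) :
    qPoch a q (k * N) = ∏ j ∈ Finset.range k, qPoch (a * q ^ j) (q ^ k) N := by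
  induction N with
  | zero => simp
  | succ N ih =>
    rw [Nat.mul_succ, qPoch, Finset.prod_range_add, ← qPoch, ih, ← Finset.prod_mul_distrib]
    refine Finset.prod_congr rfl fun j _ => ?_
    rw [qPoch_succ, ← pow_mul, mul_assoc a, ← pow_add, add_comm j]

theorem qPochInf_eq_prod (a : ℂ) (hq : ‖q‖ < 1) {k : ℕ} (hk : k ≠ 0) :
    qPochInf a q = ∏ j ∈ Finset.range k, qPochInf (a * q ^ j) (q ^ k) := by
  refine tendsto_nhds_unique
    ((tendsto_qPoch a hq).comp (tendsto_id.const_mul_atTop' hk.bot_lt)) ?_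
  simpa only [Function.comp_def, id_eq, qPoch_mul_eq_prod] using
    tendsto_finsetProd _ fun j _ => tendsto_qPoch (a * q ^ j) (norm_pow_lt_one hq hk)

theorem qPochInf_eq_mul_sq (a : ℂ) (hq : ‖q‖ < 1) :
    qPochInf a q = qPochInf a (q ^ 2) * qPochInf (a * q) (q ^ 2) := by
  simp [qPochInf_eq_prod a hq two_ne_zero, Finset.prod_range_succ]

theorem qPochInf_mul_neg (a : ℂ) (hq : ‖q‖ < 1) :
    qPochInf a q * qPochInf (-a) q = qPochInf (a ^ 2) (q ^ 2) := by
  refine tendsto_nhds_unique ((tendsto_qPoch a hq).mul (tendsto_qPoch (-a) hq)) ?_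
  refine (tendsto_qPoch (a ^ 2) (norm_pow_lt_one hq two_ne_zero)).congr fun n => ?_
  rw [qPoch, qPoch, qPoch, ← Finset.prod_mul_distrib]
  exact Finset.prod_congr rfl fun k _ => by ring

theorem qPoch_sq_reflect (hq : q ≠ 0) (ha : a ≠ 0) (m : ℕ) :
    qPoch (a / q ^ (2 * m)) (q ^ 2) m =
      (-a) ^ m / q ^ (m * (m + 1)) * qPoch (q ^ 2 / a) (q ^ 2) m := by
  induction m with
  | zero => simp
  | succ m ih =>
    have hshift : a / q ^ (2 * (m + 1)) * q ^ 2 = a / q ^ (2 * m) := by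
      field_simp
      ring
    rw [qPoch_succ_left, hshift, ih, qPoch_succ]
    field_simp
    ring

end Pochhammer

section InvQPoch

variable {q : ℂ}

/-- The reciprocal `1 / (q; q)_n`, extended to all integers by the usual convention that it
vanishes for `n < 0`, so that terminating `q`-series become sums over `ℤ`. -/
noncomputable def invQPoch (q : ℂ) (n : ℤ) : ℂ :=
  if 0 ≤ n then (qPoch q q n.toNat)⁻¹ else 0

@[simp]
theorem invQPoch_natCast (q : ℂ) (n : ℕ) : invQPoch q n = (qPoch q q n)⁻¹ := by
  simp [invQPoch]

theorem invQPoch_of_neg (q : ℂ) {n : ℤ} (hn : n < 0) : invQPoch q n = 0 :=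
  if_neg hn.not_ge

@[simp]
theorem invQPoch_zero (q : ℂ) : invQPoch q 0 = 1 := by
  simp [invQPoch]

theorem invQPoch_sub_one (hq : ‖q‖ < 1) (n : ℤ) :
    invQPoch q (n - 1) = (1 - q ^ n) * invQPoch q n := by
  rcases lt_trichotomy n 0 with hn | rfl | hn
  · rw [invQPoch_of_neg q hn, invQPoch_of_neg q (by lia), mul_zero]
  · rw [invQPoch_of_neg q (by lia), zpow_zero, sub_self, zero_mul]
  · obtain ⟨m, rfl⟩ : ∃ m : ℕ, n = (m + 1 : ℕ) := ⟨(n - 1).toNat, by lia⟩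
    rw [Nat.cast_succ, add_sub_cancel_right, ← Nat.cast_succ, invQPoch_natCast, invQPoch_natCast,
      zpow_natCast, qPoch_succ, ← pow_succ']
    have := qPoch_self_ne_zero hq m
    have := one_sub_ne_zero_of_norm_lt_one (norm_pow_lt_one hq m.succ_ne_zero)
    field_simp

theorem tendsto_invQPoch (hq : ‖q‖ < 1) :
    Tendsto (fun n : ℕ => invQPoch q n) atTop (𝓝 (qPochInf q q)⁻¹) := by
  simpa only [invQPoch_natCast] using (tendsto_qPoch q hq).inv₀ (qPochInf_ne_zero hq hq)

theorem exists_norm_invQPoch_le (hq : ‖q‖ < 1) : ∃ K, ∀ n, ‖invQPoch q n‖ ≤ K := by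
  obtain ⟨K, hK⟩ := (Metric.isBounded_range_of_tendsto _ (tendsto_invQPoch hq)).exists_norm_le
  refine ⟨K, fun n => ?_⟩
  rcases lt_or_ge n 0 with hn | hn
  · rw [invQPoch_of_neg q hn, norm_zero]
    exact (norm_nonneg _).trans (hK _ ⟨0, rfl⟩)
  · lift n to ℕ using hn
    exact hK _ ⟨n, rfl⟩

theorem summable_mul_invQPoch_mul_invQPoch (q : ℂ) (A : ℤ → ℂ) {a : ℤ} (ha : 0 < a) (m n : ℤ) :
    Summable fun r : ℤ => A r * invQPoch q (m - a * r) * invQPoch q (n + a * r) := by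
  refine summable_of_hasFiniteSupport ((Set.finite_Icc (-|n|) |m|).subset ?_)
  refine Function.support_subset_iff'.2 fun r hr => ?_
  rw [Set.mem_Icc, not_and_or, not_le, not_le] at hr
  rcases hr with hr | hr
  · rw [invQPoch_of_neg q (n := n + a * r), mul_zero]
    nlinarith [le_abs_self n, abs_nonneg n]
  · rw [invQPoch_of_neg q (n := m - a * r), mul_zero, zero_mul]
    nlinarith [le_abs_self m, abs_nonneg m]

end InvQPoch

/-! ### Summation over the integers -/

section Summation

variable {M : Type*} [AddCommGroup M] [TopologicalSpace M] [IsTopologicalAddGroup M] [T2Space M]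
  {f g h G : ℤ → M}

theorem tsum_eq_tsum_of_sub_eq_shift_sub (hf : Summable f) (hg : Summable g) (hG : Summable G)
    (hsub : ∀ n, f n - g n = G (n + 1) - G n) : ∑' n, f n = ∑' n, g n := by
  have hshift : ∑' n, G (n + 1) = ∑' n, G n := (Equiv.addRight (1 : ℤ)).tsum_eq G
  have hGshift : Summable fun n => G (n + 1) := (Equiv.addRight (1 : ℤ)).summable_iff.2 hG
  rw [← sub_eq_zero, ← hf.tsum_sub hg, tsum_congr hsub, hGshift.tsum_sub hG, hshift, sub_self]

theorem tsum_eq_tsum_of_add_reflect_sub_eq_shift_sub [IsAddTorsionFree M] (hf : Summable f)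
    (hg : Summable g) (hG : Summable G) (k : ℤ)
    (hsub : ∀ n, f n + f (k - n) - (g n + g (k - n)) = G (n + 1) - G n) :
    ∑' n, f n = ∑' n, g n := by
  have hreflect {F : ℤ → M} (hF : Summable F) :
      Summable (fun n => F n + F (k - n)) ∧ ∑' n, (F n + F (k - n)) = 2 • ∑' n, F n := by
    have hF' : Summable fun n => F (k - n) := (Equiv.subLeft k).summable_iff.2 hF
    have htsum : ∑' n, F (k - n) = ∑' n, F n := (Equiv.subLeft k).tsum_eq F
    exact ⟨hF.add hF', by rw [hF.tsum_add hF', htsum, two_nsmul]⟩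
  have htsum := tsum_eq_tsum_of_sub_eq_shift_sub (hreflect hf).1 (hreflect hg).1 hG hsub
  rw [(hreflect hf).2, (hreflect hg).2] at htsum
  exact nsmul_right_injective two_ne_zero htsum

theorem hasSum_mul_prod {R ι κ : Type*} [NormedRing R] [NormedSpace ℝ R] [FiniteDimensional ℝ R]
    {f : ι → R} {g : κ → R} {a b : R} (hf : HasSum f a) (hg : HasSum g b) :
    HasSum (fun x : ι × κ => f x.1 * g x.2) (a * b) :=
  have := FiniteDimensional.complete ℝ R
  hf.mul hg (summable_mul_of_summable_norm hf.summable.norm hg.summable.norm)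

end Summation

section Theta

open scoped Real

variable {q z : ℂ}

/-- The general term `q ^ (r ^ 2) z ^ r` of a two-sided theta series. -/
noncomputable def thetaTerm (q z : ℂ) (r : ℤ) : ℂ :=
  q ^ (r ^ 2) * z ^ r

@[simp]
theorem thetaTerm_zero (q z : ℂ) : thetaTerm q z 0 = 1 := by
  simp [thetaTerm]

theorem thetaTerm_one_right (q : ℂ) (r : ℤ) : thetaTerm q 1 r = q ^ (r ^ 2) := by
  rw [thetaTerm, one_zpow, mul_one]

theorem thetaTerm_mul_thetaTerm (q₁ q₂ z₁ z₂ : ℂ) (r : ℤ) :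
    thetaTerm q₁ z₁ r * thetaTerm q₂ z₂ r = thetaTerm (q₁ * q₂) (z₁ * z₂) r := by
  rw [thetaTerm, thetaTerm, thetaTerm, mul_zpow, mul_zpow, mul_mul_mul_comm]

theorem thetaTerm_add_one (hq₀ : q ≠ 0) (hz : z ≠ 0) (r : ℤ) :
    thetaTerm q z (r + 1) = thetaTerm q z r * (q ^ (2 * r + 1) * z) := by
  have hexp : (r + 1) ^ 2 = r ^ 2 + (2 * r + 1) := by ring
  rw [thetaTerm, thetaTerm, hexp, zpow_add₀ hq₀, zpow_add_one₀ hz, mul_mul_mul_comm]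

theorem thetaTerm_neg (hz : z ≠ 0) (r : ℤ) :
    thetaTerm q z (-r) = thetaTerm q z r * z ^ (-(2 * r)) := by
  have hexp : -r = r + -(2 * r) := by ring
  rw [thetaTerm, thetaTerm, neg_sq, mul_assoc, ← zpow_add₀ hz, ← hexp]

theorem summable_thetaTerm (hq₀ : q ≠ 0) (hq : ‖q‖ < 1) (hz : z ≠ 0) :
    Summable (thetaTerm q z) := by
  have exists_exp_eq {c w : ℂ} (hc : c ≠ 0) (hw : w ≠ 0) : ∃ v, Complex.exp (c * v) = w :=
    ⟨Complex.log w / c, by rw [mul_div_cancel₀ _ hc, Complex.exp_log hw]⟩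
  obtain ⟨τ, rfl⟩ := exists_exp_eq (c := π * Complex.I) (by simp [Real.pi_ne_zero]) hq₀
  obtain ⟨v, rfl⟩ := exists_exp_eq (c := 2 * π * Complex.I) (by simp [Real.pi_ne_zero]) hz
  have hτ : 0 < τ.im := by
    simpa [Complex.norm_exp, Real.pi_pos] using hq
  refine ((summable_jacobiTheta₂_term_iff v τ).2 hτ).congr fun r => ?_
  rw [thetaTerm, jacobiTheta₂_term, ← Complex.exp_int_mul, ← Complex.exp_int_mul, ← Complex.exp_add]
  push_cast
  ring_nf

theorem summable_thetaTerm_mul {g : ℤ → ℂ} {K : ℝ} (hq₀ : q ≠ 0) (hq : ‖q‖ < 1)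
    (hz : z ≠ 0) (hg : ∀ r, ‖g r‖ ≤ K) : Summable fun r => thetaTerm q z r * g r := by
  refine .of_norm_bounded ((summable_thetaTerm hq₀ hq hz).norm.mul_right K) fun r => ?_
  rw [norm_mul]
  exact mul_le_mul_of_nonneg_left (hg r) (norm_nonneg _)

end Theta

/-! ### Euler's theorem -/

section Euler

variable {q z : ℂ}

/-- Euler's series `∑ q ^ (n (n - 1) / 2) z ^ n / (q; q)_n`, whose sum is `(-z; q)_∞`. -/
noncomputable def eulerSeries (q z : ℂ) : ℂ :=
  ∑' n : ℕ, q ^ n.choose 2 * z ^ n / qPoch q q n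

theorem summable_eulerSeries (hq : ‖q‖ < 1) (z : ℂ) :
    Summable fun n : ℕ => q ^ n.choose 2 * z ^ n / qPoch q q n := by
  have hpow : Tendsto (fun n : ℕ => q ^ n) atTop (𝓝 0) :=
    tendsto_pow_atTop_nhds_zero_of_norm_lt_one hq
  have hratio : Tendsto (fun n : ℕ => ‖q ^ n * z / (1 - q ^ (n + 1))‖) atTop (𝓝 0) := by
    simpa using ((hpow.mul_const z).div
      (tendsto_const_nhds.sub (hpow.comp (tendsto_add_atTop_nat 1))) (by simp)).norm
  refine summable_of_ratio_norm_eventually_le (r := 1 / 2) (by norm_num) ?_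
  filter_upwards [hratio.eventually_le_const (by norm_num : (0 : ℝ) < 1 / 2)] with n hn
  have hstep : q ^ (n + 1).choose 2 * z ^ (n + 1) / qPoch q q (n + 1) =
      q ^ n * z / (1 - q ^ (n + 1)) * (q ^ n.choose 2 * z ^ n / qPoch q q n) := by
    rw [Nat.choose_succ_succ' n 1, Nat.choose_one_right, qPoch_succ, ← pow_succ',
      div_mul_div_comm, mul_comm (1 - q ^ (n + 1))]
    ring
  rw [hstep, norm_mul]
  exact mul_le_mul_of_nonneg_right hn (norm_nonneg _)

theorem eulerSeries_eq_one_add_mul (hq : ‖q‖ < 1) (z : ℂ) :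
    eulerSeries q z = (1 + z) * eulerSeries q (z * q) := by
  have hterm (n : ℕ) : q ^ (n + 1).choose 2 * z ^ (n + 1) / qPoch q q (n + 1) =
      q ^ (n + 1).choose 2 * (z * q) ^ (n + 1) / qPoch q q (n + 1) +
        z * (q ^ n.choose 2 * (z * q) ^ n / qPoch q q n) := by
    have := qPoch_self_ne_zero hq n
    have := one_sub_ne_zero_of_norm_lt_one (norm_pow_lt_one hq n.succ_ne_zero)
    rw [Nat.choose_succ_succ' n 1, Nat.choose_one_right, qPoch_succ, ← pow_succ']
    field_simp
    ring
  have hz := summable_eulerSeries hq z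
  have hzq := summable_eulerSeries hq (z * q)
  rw [eulerSeries, hz.tsum_eq_zero_add, tsum_congr hterm,
    ((summable_nat_add_iff 1).2 hzq).tsum_add (hzq.mul_left z), tsum_mul_left, ← eulerSeries,
    add_mul, one_mul, ← add_assoc]
  congr 1
  rw [eulerSeries, hzq.tsum_eq_zero_add]
  simp

theorem eulerSeries_eq_qPoch_mul (hq : ‖q‖ < 1) (z : ℂ) (N : ℕ) :
    eulerSeries q z = qPoch (-z) q N * eulerSeries q (z * q ^ N) := by
  induction N with
  | zero => simp
  | succ N ih =>
    rw [ih, eulerSeries_eq_one_add_mul hq, qPoch_succ, pow_succ]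
    ring_nf

theorem tendsto_eulerSeries_mul_pow (hq : ‖q‖ < 1) (z : ℂ) :
    Tendsto (fun N : ℕ => eulerSeries q (z * q ^ N)) atTop (𝓝 1) := by
  have hzero : eulerSeries q 0 = 1 := by
    rw [eulerSeries, tsum_eq_single 0 fun n hn => by simp [hn]]
    simp
  have hpow : Tendsto (fun N : ℕ => z * q ^ N) atTop (𝓝 0) := by
    simpa using (tendsto_pow_atTop_nhds_zero_of_norm_lt_one hq).const_mul z
  rw [← hzero]
  refine tendsto_tsum_of_dominated_convergence (summable_eulerSeries hq z).norm
    (fun n => ((hpow.pow n).const_mul _).div_const _) (.of_forall fun N n => ?_)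
  rw [mul_pow, ← mul_assoc, mul_div_right_comm, norm_mul, ← pow_mul]
  exact mul_le_of_le_one_right (norm_nonneg _)
    ((norm_pow q _).trans_le (pow_le_one₀ (norm_nonneg q) hq.le))

theorem hasSum_euler (hq : ‖q‖ < 1) (z : ℂ) :
    HasSum (fun n : ℕ => q ^ n.choose 2 * z ^ n / qPoch q q n) (qPochInf (-z) q) := by
  convert (summable_eulerSeries hq z).hasSum
  refine tendsto_nhds_unique ?_ (tendsto_const_nhds (x := eulerSeries q z) (f := atTop (α := ℕ)))
  simpa only [← eulerSeries_eq_qPoch_mul hq, mul_one] using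
    (tendsto_qPoch (-z) hq).mul (tendsto_eulerSeries_mul_pow hq z)

theorem hasSum_euler_sq (hq : ‖q‖ < 1) (z : ℂ) :
    HasSum (fun n : ℕ => q ^ n ^ 2 * z ^ n / qPoch (q ^ 2) (q ^ 2) n)
      (qPochInf (-(z * q)) (q ^ 2)) := by
  refine (hasSum_euler (norm_pow_lt_one hq two_ne_zero) (z * q)).congr_fun fun n => ?_
  have hexp : n ^ 2 = 2 * n.choose 2 + n := by
    induction n with
    | zero => rfl
    | succ n ih => grind [Nat.choose_succ_succ' n 1, Nat.choose_one_right]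
  rw [hexp]
  ring

theorem hasSum_euler_sq_int (hq : ‖q‖ < 1) (z : ℂ) :
    HasSum (fun n : ℤ => thetaTerm q z n * invQPoch (q ^ 2) n)
      (qPochInf (-(z * q)) (q ^ 2)) := by
  refine (Nat.cast_injective.hasSum_iff fun n hn => ?_).1 ?_
  · rw [invQPoch_of_neg, mul_zero]
    by_contra! h
    exact hn ⟨n.toNat, Int.toNat_of_nonneg h⟩
  · refine (hasSum_euler_sq hq z).congr_fun fun n => ?_
    rw [Function.comp_apply, thetaTerm, invQPoch_natCast, zpow_natCast, div_eq_mul_inv]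
    norm_cast

end Euler

/-! ### Durfee rectangles and the Jacobi triple product -/

section Durfee

variable {q : ℂ}

theorem summable_durfee (hq₀ : q ≠ 0) (hq : ‖q‖ < 1) (m a b : ℤ) :
    Summable fun n : ℤ => q ^ (n ^ 2 + m * n) * invQPoch q (n + a) * invQPoch q (n + b) := by
  obtain ⟨K, hK⟩ := exists_norm_invQPoch_le hq
  have hbound (n : ℤ) : ‖invQPoch q (n + a) * invQPoch q (n + b)‖ ≤ K * K := by
    rw [norm_mul]
    exact mul_le_mul (hK _) (hK _) (norm_nonneg _) ((norm_nonneg _).trans (hK 0))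
  refine (summable_thetaTerm_mul hq₀ hq (zpow_ne_zero m hq₀) hbound).congr fun n => ?_
  rw [thetaTerm, zpow_add₀ hq₀, zpow_mul, ← mul_assoc]

theorem tsum_durfee_succ (hq₀ : q ≠ 0) (hq : ‖q‖ < 1) (m : ℤ) :
    ∑' n : ℤ, q ^ (n ^ 2 + m * n) * invQPoch q n * invQPoch q (n + m) =
      ∑' n : ℤ, q ^ (n ^ 2 + (m + 1) * n) * invQPoch q n * invQPoch q (n + (m + 1)) := by
  have hsum (m a b : ℤ) := summable_durfee hq₀ hq m a b
  refine tsum_eq_tsum_of_sub_eq_shift_sub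
    (G := fun n => -(q ^ (n ^ 2 + m * n) * invQPoch q (n + -1) * invQPoch q (n + m)))
    (by simpa using hsum m 0 m) (by simpa using hsum (m + 1) 0 (m + 1)) (hsum m (-1) m).neg
    fun n => ?_
  have hexp₁ : n ^ 2 + (m + 1) * n = n ^ 2 + m * n + n := by ring
  have hexp₂ : (n + 1) ^ 2 + m * (n + 1) = n ^ 2 + m * n + n + (n + m + 1) := by ring
  have hm : invQPoch q (n + m) = (1 - q ^ (n + m + 1)) * invQPoch q (n + m + 1) := by
    rw [← invQPoch_sub_one hq, add_sub_cancel_right]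
  rw [hexp₁, hexp₂, add_neg_cancel_right, add_right_comm n 1 m, ← add_assoc n m 1,
    ← sub_eq_add_neg n 1, invQPoch_sub_one hq, hm, zpow_add₀ hq₀ (_ + _ + _), zpow_add₀ hq₀ _ n]
  ring

theorem tendsto_durfee_summand (hq : ‖q‖ < 1) (n : ℤ) :
    Tendsto (fun k : ℕ => q ^ (n ^ 2 + k * n) * invQPoch q n * invQPoch q (n + k)) atTop
      (𝓝 (if n = 0 then (qPochInf q q)⁻¹ else 0)) := by
  rcases lt_or_ge n 0 with hn | hn
  · simp [invQPoch_of_neg q hn, hn.ne]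
  lift n to ℕ using hn
  rcases eq_or_ne n 0 with rfl | hn
  · simpa using tendsto_invQPoch hq
  have hpow : Tendsto (fun k : ℕ => (q ^ k) ^ n) atTop (𝓝 0) := by
    simpa [hn] using (tendsto_pow_atTop_nhds_zero_of_norm_lt_one hq).pow n
  have hlim := ((hpow.const_mul (q ^ n ^ 2)).mul_const (invQPoch q n)).mul
    ((tendsto_invQPoch hq).comp (tendsto_add_atTop_nat n))
  rw [mul_zero, zero_mul, zero_mul] at hlim
  rw [if_neg (Nat.cast_ne_zero.2 hn)]
  refine hlim.congr fun k => ?_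
  rw [← pow_mul, ← pow_add, Function.comp_apply, add_comm k n]
  norm_cast

theorem norm_durfee_summand_le (hq : ‖q‖ < 1) {K : ℝ} (hK : ∀ n, ‖invQPoch q n‖ ≤ K) (k : ℕ)
    (n : ℤ) :
    ‖q ^ (n ^ 2 + k * n) * invQPoch q n * invQPoch q (n + k)‖ ≤ ‖q ^ (n ^ 2)‖ * (K * K) := by
  have hK₀ : 0 ≤ K := (norm_nonneg _).trans (hK 0)
  rcases lt_or_ge n 0 with hn | hn
  · simp only [invQPoch_of_neg q hn, mul_zero, zero_mul, norm_zero]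
    positivity
  lift n to ℕ using hn
  have hpow : ‖q ^ ((n : ℤ) ^ 2 + k * n)‖ ≤ ‖q ^ ((n : ℤ) ^ 2)‖ := by
    norm_cast
    rw [norm_pow, norm_pow]
    exact pow_le_pow_of_le_one (norm_nonneg q) hq.le (Nat.le_add_right _ _)
  rw [mul_assoc, norm_mul, norm_mul (invQPoch q n)]
  gcongr
  · exact hK n
  · exact hK _

theorem tendsto_tsum_durfee (hq₀ : q ≠ 0) (hq : ‖q‖ < 1) :
    Tendsto (fun k : ℕ => ∑' n : ℤ, q ^ (n ^ 2 + k * n) * invQPoch q n * invQPoch q (n + k))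
      atTop (𝓝 (qPochInf q q)⁻¹) := by
  obtain ⟨K, hK⟩ := exists_norm_invQPoch_le hq
  have hbound : Summable fun n : ℤ => ‖q ^ (n ^ 2)‖ * (K * K) := by
    simpa only [thetaTerm_one_right] using
      (summable_thetaTerm hq₀ hq one_ne_zero).norm.mul_right (K * K)
  rw [← tsum_ite_eq (0 : ℤ) fun _ => (qPochInf q q)⁻¹]
  exact tendsto_tsum_of_dominated_convergence hbound (tendsto_durfee_summand hq)
    (.of_forall (norm_durfee_summand_le hq hK))

theorem hasSum_durfee (hq₀ : q ≠ 0) (hq : ‖q‖ < 1) (m : ℤ) :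
    HasSum (fun n : ℤ => q ^ (n ^ 2 + m * n) * invQPoch q n * invQPoch q (n + m))
      (qPochInf q q)⁻¹ := by
  have hperiodic : Function.Periodic (fun m : ℤ =>
      ∑' n : ℤ, q ^ (n ^ 2 + m * n) * invQPoch q n * invQPoch q (n + m)) 1 :=
    fun m => (tsum_durfee_succ hq₀ hq m).symm
  have hconst (m : ℤ) := by simpa only [mul_one, Int.cast_id] using hperiodic.int_mul_eq m
  have htsum := (tendsto_tsum_durfee hq₀ hq).congr fun k : ℕ => hconst k
  rw [tendsto_nhds_unique htsum tendsto_const_nhds, ← hconst m]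
  exact (by simpa only [add_zero] using summable_durfee hq₀ hq m 0 m : Summable _).hasSum

theorem thetaTerm_add_mul_thetaTerm_inv (hq₀ : q ≠ 0) {z : ℂ} (hz : z ≠ 0) (r b : ℤ) :
    thetaTerm q z (r + b) * thetaTerm q z⁻¹ b =
      thetaTerm q z r * (q ^ 2) ^ (b ^ 2 + r * b) := by
  have hexp : (r + b) ^ 2 + b ^ 2 = r ^ 2 + (2 : ℕ) * (b ^ 2 + r * b) := by
    push_cast
    ring
  have hz' : z ^ (r + b) * z⁻¹ ^ b = z ^ r := by
    rw [inv_zpow', ← zpow_add₀ hz, add_neg_cancel_right]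
  rw [thetaTerm, thetaTerm, thetaTerm, mul_mul_mul_comm, hz', ← zpow_add₀ hq₀, hexp,
    zpow_add₀ hq₀, zpow_mul, zpow_natCast]
  ring

theorem hasSum_jacobi_triple_product (hq₀ : q ≠ 0) (hq : ‖q‖ < 1) {z : ℂ} (hz : z ≠ 0) :
    HasSum (thetaTerm q z)
      (qPochInf (-(z * q)) (q ^ 2) * qPochInf (-(z⁻¹ * q)) (q ^ 2) *
        qPochInf (q ^ 2) (q ^ 2)) := by
  have hq2 : ‖q ^ 2‖ < 1 := norm_pow_lt_one hq two_ne_zero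
  -- In the product of Euler's sums for `z` and `z⁻¹`, the terms with index difference `r` form
  -- a Durfee rectangle sum.
  let e : ℤ × ℤ ≃ ℤ × ℤ :=
    { toFun p := (p.1 + p.2, p.2)
      invFun p := (p.1 - p.2, p.2)
      left_inv p := by simp
      right_inv p := by simp }
  have hprod := hasSum_mul_prod (hasSum_euler_sq_int hq z) (hasSum_euler_sq_int hq z⁻¹)
  have hfiber (r : ℤ) : HasSum
      (fun b => thetaTerm q z (r + b) * invQPoch (q ^ 2) (r + b) *
        (thetaTerm q z⁻¹ b * invQPoch (q ^ 2) b))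
      (thetaTerm q z r * (qPochInf (q ^ 2) (q ^ 2))⁻¹) := by
    refine ((hasSum_durfee (pow_ne_zero 2 hq₀) hq2 r).mul_left _).congr_fun fun b => ?_
    rw [mul_mul_mul_comm, thetaTerm_add_mul_thetaTerm_inv hq₀ hz, add_comm b r]
    ring
  have hsum := ((e.hasSum_iff.2 hprod).prod_fiberwise hfiber).mul_right (qPochInf (q ^ 2) (q ^ 2))
  simpa only [inv_mul_cancel_right₀ (qPochInf_ne_zero hq2 hq2)] using hsum

end Durfee

/-! ### Bailey pairs -/

section Bailey

variable {ι : Type*} {q : ℂ}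

theorem zpow_sq_add_mul_shift (hq₀ : q ≠ 0) (n u c : ℤ) :
    q ^ (n ^ 2 + c * n) =
      q ^ (u ^ 2 + c * u) * q ^ ((n - u) ^ 2 + (2 * u + c) * (n - u)) := by
  rw [← zpow_add₀ hq₀]
  congr 1
  ring

theorem hasSum_durfee_shift (hq₀ : q ≠ 0) (hq : ‖q‖ < 1) (u c : ℤ) :
    HasSum (fun n : ℤ => q ^ (n ^ 2 + c * n) * (invQPoch q (n - u) * invQPoch q (n + u + c)))
      (q ^ (u ^ 2 + c * u) * (qPochInf q q)⁻¹) := by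
  have hdurfee := (Equiv.subRight u).hasSum_iff.2 (hasSum_durfee hq₀ hq (2 * u + c))
  refine (hdurfee.mul_left _).congr_fun fun n => ?_
  have harg : n - u + (2 * u + c) = n + u + c := by ring
  rw [Function.comp_apply, Equiv.subRight_apply, zpow_sq_add_mul_shift hq₀ n u c, harg]
  ring

theorem summable_bailey (hq₀ : q ≠ 0) (hq : ‖q‖ < 1) {α : ι → ℂ} (hα : Summable α) (u : ι → ℤ)
    (c : ℤ) :
    Summable fun x : ι × ℤ => α x.1 *
      (q ^ (x.2 ^ 2 + c * x.2) * (invQPoch q (x.2 - u x.1) * invQPoch q (x.2 + u x.1 + c))) := by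
  obtain ⟨K, hK⟩ := exists_norm_invQPoch_le hq
  have htheta := (summable_thetaTerm hq₀ hq (zpow_ne_zero c hq₀)).mul_right ((K * K : ℝ) : ℂ)
  refine .of_norm_bounded (hasSum_mul_prod hα.hasSum htheta.hasSum).summable.norm fun x => ?_
  have hK₀ : 0 ≤ K := (norm_nonneg _).trans (hK 0)
  simp only [thetaTerm, ← zpow_mul, ← zpow_add₀ hq₀, norm_mul, Complex.norm_real,
    Real.norm_of_nonneg hK₀]
  gcongr
  · exact hK _
  · exact hK _

/-- The term `α r` sits at index `u r` of a Bailey pair relative to `q ^ c`. -/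
theorem hasSum_bailey (hq₀ : q ≠ 0) (hq : ‖q‖ < 1) {α : ι → ℂ} {β : ℤ → ℂ} {u : ι → ℤ} {c : ℤ}
    {A : ℂ} (hα : Summable α)
    (hβ : ∀ n, HasSum (fun r => α r * (invQPoch q (n - u r) * invQPoch q (n + u r + c))) (β n))
    (hA : HasSum (fun r => α r * q ^ (u r ^ 2 + c * u r)) A) :
    HasSum (fun n : ℤ => q ^ (n ^ 2 + c * n) * β n) (A / qPochInf q q) := by
  have hsum := (summable_bailey hq₀ hq hα u c).hasSum
  have hrows := hsum.prod_fiberwise fun r => (hasSum_durfee_shift hq₀ hq (u r) c).mul_left (α r)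
  have htotal : HasSum (fun r => α r * (q ^ (u r ^ 2 + c * u r) * (qPochInf q q)⁻¹))
      (A / qPochInf q q) := by
    simpa only [mul_assoc, div_eq_mul_inv] using hA.mul_right (qPochInf q q)⁻¹
  rw [hrows.unique htotal] at hsum
  refine ((Equiv.prodComm ℤ ι).hasSum_iff.2 hsum).prod_fiberwise fun n => ?_
  refine ((hβ n).mul_left (q ^ (n ^ 2 + c * n))).congr_fun fun r => ?_
  exact mul_left_comm _ _ _

end Bailey

section BaileyTheta

variable {Q p z : ℂ}

/-- The summand of the Bailey transform of the sequence supported on the multiples of `a`, with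
theta term `p ^ (r ^ 2) z ^ r` at index `a r`, relative to the parameter `Q ^ c`. -/
noncomputable def baileyTerm (Q p z : ℂ) (a c : ℕ) (n r : ℤ) : ℂ :=
  thetaTerm p z r * invQPoch Q (n - a * r) * invQPoch Q (n + a * r + c)

theorem summable_baileyTerm (Q p z : ℂ) {a : ℕ} (ha : a ≠ 0) (c : ℕ) (n : ℤ) :
    Summable (baileyTerm Q p z a c n) := by
  refine (summable_mul_invQPoch_mul_invQPoch Q (thetaTerm p z) (a := a) (by positivity) n
    (n + c)).congr fun r => ?_
  rw [baileyTerm, add_right_comm]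

theorem tsum_baileyTerm_of_neg (Q p z : ℂ) (a : ℕ) {c : ℕ} (hc : c ≤ 1) {n : ℤ} (hn : n < 0) :
    ∑' r, baileyTerm Q p z a c n r = 0 := by
  refine (tsum_congr fun r => ?_).trans tsum_zero
  rcases lt_or_ge (n - a * r) 0 with h | h
  · rw [baileyTerm, invQPoch_of_neg Q h, mul_zero, zero_mul]
  · rw [baileyTerm, invQPoch_of_neg Q (n := n + a * r + c) (by lia), mul_zero]

theorem tsum_baileyTerm_zero (Q p z : ℂ) {a c : ℕ} (hac : c < a) :
    ∑' r, baileyTerm Q p z a c 0 r = (qPoch Q Q c)⁻¹ := by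
  rw [tsum_eq_single 0 fun r hr => ?_]
  · simp [baileyTerm]
  rcases hr.lt_or_gt with h | h
  · rw [baileyTerm, invQPoch_of_neg Q (n := 0 + a * r + c) (by nlinarith), mul_zero]
  · rw [baileyTerm, invQPoch_of_neg Q (n := 0 - a * r) (by nlinarith), mul_zero, zero_mul]

theorem hasSum_bailey_theta (hQ₀ : Q ≠ 0) (hQ : ‖Q‖ < 1) (hp₀ : p ≠ 0) (hp : ‖p‖ < 1)
    (hz : z ≠ 0) {a c : ℕ} (ha : a ≠ 0) (hc : c ≤ 1) {B y : ℂ} (hB : p * Q ^ a ^ 2 = B)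
    (hy : z * Q ^ (c * a) = y) :
    HasSum (fun n : ℕ => Q ^ (n ^ 2 + c * n) * ∑' r, baileyTerm Q p z a c n r)
      (qPochInf (-(y * B)) (B ^ 2) * qPochInf (-(y⁻¹ * B)) (B ^ 2) * qPochInf (B ^ 2) (B ^ 2) /
        qPochInf Q Q) := by
  have hA : HasSum (fun r : ℤ => thetaTerm p z r * Q ^ ((a * r) ^ 2 + c * (a * r)))
      (qPochInf (-(y * B)) (B ^ 2) * qPochInf (-(y⁻¹ * B)) (B ^ 2) * qPochInf (B ^ 2) (B ^ 2)) := by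
    have hB₀ : B ≠ 0 := hB ▸ mul_ne_zero hp₀ (pow_ne_zero _ hQ₀)
    have hB₁ : ‖B‖ < 1 := by
      rw [← hB, norm_mul]
      exact mul_lt_one_of_nonneg_of_lt_one_left (norm_nonneg p) hp
        (norm_pow_lt_one hQ (pow_ne_zero 2 ha)).le
    have hy₀ : y ≠ 0 := hy ▸ mul_ne_zero hz (pow_ne_zero _ hQ₀)
    refine (hasSum_jacobi_triple_product hB₀ hB₁ hy₀).congr_fun fun r => ?_
    rw [← hB, ← hy, ← thetaTerm_mul_thetaTerm, thetaTerm.eq_def (Q ^ _), ← zpow_natCast,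
      ← zpow_natCast, ← zpow_mul, ← zpow_mul, ← zpow_add₀ hQ₀]
    push_cast
    ring_nf
  have hβ (n : ℤ) : HasSum (fun r => thetaTerm p z r *
      (invQPoch Q (n - a * r) * invQPoch Q (n + a * r + c))) (∑' r, baileyTerm Q p z a c n r) :=
    (summable_baileyTerm Q p z ha c n).hasSum.congr_fun fun r => (mul_assoc _ _ _).symm
  have hsum := hasSum_bailey hQ₀ hQ (summable_thetaTerm hp₀ hp hz) hβ hA
  refine ((Nat.cast_injective.hasSum_iff fun n hn => ?_).2 hsum).congr_fun fun n => ?_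
  · rw [tsum_baileyTerm_of_neg Q p z a hc, mul_zero]
    by_contra! h
    exact hn ⟨n.toNat, Int.toNat_of_nonneg h⟩
  · rw [Function.comp_apply]
    norm_cast

end BaileyTheta

section BaileyPairs

variable {w q : ℂ}

/-- The certificate of the recurrence for `∑' r, baileyTerm (w ^ 4) (w ^ 3) (-w⁻¹) 1 0 n r`: once
symmetrized in `r ↦ -r`, the recurrence telescopes termwise. It is found by the `q`-Zeilberger
algorithm. -/
noncomputable def baileyCertificateOneZero (w : ℂ) (n r : ℤ) : ℂ :=
  -(thetaTerm (w ^ 3) (-w⁻¹) r *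
      (w ^ (4 * n - 4 * r) + (1 + w ^ (4 * n - 2)) * w ^ (4 * n - 2 * r) + w ^ (4 * n - 2))) *
    invQPoch (w ^ 4) (n - 1 * r) * invQPoch (w ^ 4) (n - 1 + 1 * r)

theorem baileyCertificateOneZero_add_one_sub (hw₀ : w ≠ 0) (hw : ‖w‖ < 1) (n r : ℤ) :
    baileyCertificateOneZero w n (r + 1) - baileyCertificateOneZero w n r =
      (1 - w ^ (8 * n)) * (1 + w ^ (4 * n - 2)) * baileyTerm (w ^ 4) (w ^ 3) (-w⁻¹) 1 0 n r +
          (1 - w ^ (8 * n)) * (1 + w ^ (4 * n - 2)) *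
            baileyTerm (w ^ 4) (w ^ 3) (-w⁻¹) 1 0 n (0 - r) -
        (baileyTerm (w ^ 4) (w ^ 3) (-w⁻¹) 1 0 (n - 1) r +
          baileyTerm (w ^ 4) (w ^ 3) (-w⁻¹) 1 0 (n - 1) (0 - r)) := by
  have hw4 : ‖w ^ 4‖ < 1 := norm_pow_lt_one hw four_ne_zero
  have hz : -w⁻¹ ≠ 0 := neg_ne_zero.2 (inv_ne_zero hw₀)
  have hsub := invQPoch_sub_one hw4 (n - r)
  have hadd := invQPoch_sub_one hw4 (n + r)
  rw [sub_right_comm] at hsub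
  rw [add_sub_right_comm] at hadd
  have hsub_succ : n - (r + 1) = n - 1 - r := by ring
  have hadd_succ : n - 1 + (r + 1) = n + r := by ring
  simp only [baileyCertificateOneZero, baileyTerm, Nat.cast_one, one_mul, Nat.cast_zero, add_zero,
    zero_sub, mul_neg, sub_neg_eq_add, ← sub_eq_add_neg, hsub_succ, hadd_succ, hsub, hadd,
    thetaTerm_neg hz, thetaTerm_add_one (pow_ne_zero 3 hw₀) hz]
  have hexp (k : ℕ) (m : ℤ) : w ^ (2 * k * m) = (w ^ (2 * m)) ^ k := by
    rw [← zpow_natCast, ← zpow_mul, mul_right_comm]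
  have hcube (m : ℤ) : (w ^ 3) ^ (2 * m) = (w ^ (2 * m)) ^ 3 := by
    rw [← zpow_natCast, ← zpow_natCast, zpow_comm]
  have hfourth (m : ℤ) : (w ^ 4) ^ m = (w ^ (2 * m)) ^ 2 := by
    rw [← hexp, ← zpow_natCast, ← zpow_mul]; rfl
  have hinv : (-w⁻¹) ^ (-(2 * r)) = w ^ (2 * r) := by
    rw [(even_two_mul r).neg.neg_zpow, inv_zpow, zpow_neg, inv_inv]
  have hexp_four (m : ℤ) : w ^ (4 * m) = (w ^ (2 * m)) ^ 2 := hexp 2 m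
  have hexp_eight : w ^ (8 * n) = (w ^ (2 * n)) ^ 4 := hexp 4 n
  simp only [hexp_eight, hexp_four, hcube, hfourth, hinv, mul_sub, mul_add, zpow_sub₀ hw₀,
    zpow_add₀ hw₀, zpow_add_one₀ (pow_ne_zero 3 hw₀), mul_one, zpow_ofNat]
  have hx := zpow_ne_zero (2 * n) hw₀
  have hy := zpow_ne_zero (2 * r) hw₀
  generalize w ^ (2 * n) = x at *
  generalize w ^ (2 * r) = y at *
  field_simp
  ring

theorem tsum_baileyTerm_one_zero_sub_one (hw₀ : w ≠ 0) (hw : ‖w‖ < 1) (n : ℤ) :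
    (1 - w ^ (8 * n)) * (1 + w ^ (4 * n - 2)) *
        ∑' r, baileyTerm (w ^ 4) (w ^ 3) (-w⁻¹) 1 0 n r =
      ∑' r, baileyTerm (w ^ 4) (w ^ 3) (-w⁻¹) 1 0 (n - 1) r := by
  have hsum (n : ℤ) := summable_baileyTerm (w ^ 4) (w ^ 3) (-w⁻¹) one_ne_zero 0 n
  rw [← tsum_mul_left]
  have hcert : Summable (baileyCertificateOneZero w n) :=
    summable_mul_invQPoch_mul_invQPoch (w ^ 4) _ one_pos n (n - 1)
  exact tsum_eq_tsum_of_add_reflect_sub_eq_shift_sub ((hsum n).mul_left _) (hsum (n - 1)) hcert 0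
    fun r => (baileyCertificateOneZero_add_one_sub hw₀ hw n r).symm

theorem tsum_baileyTerm_one_zero (hw₀ : w ≠ 0) (hw : ‖w‖ < 1) (n : ℕ) :
    ∑' r, baileyTerm (w ^ 4) (w ^ 3) (-w⁻¹) 1 0 n r =
      qPoch (w ^ 2) (w ^ 4) n / qPoch (w ^ 4) (w ^ 4) (2 * n) := by
  induction n with
  | zero => simpa using tsum_baileyTerm_zero (w ^ 4) (w ^ 3) (-w⁻¹) one_pos
  | succ n ih =>
    have hw4 : ‖w ^ 4‖ < 1 := norm_pow_lt_one hw four_ne_zero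
    have hrec := tsum_baileyTerm_one_zero_sub_one hw₀ hw (n + 1)
    have hexp₈ : (8 : ℤ) * (n + 1) = (8 * n + 8 : ℕ) := by push_cast; ring
    have hexp₄ : (4 : ℤ) * (n + 1) - 2 = (4 * n + 2 : ℕ) := by push_cast; ring
    rw [add_sub_cancel_right, ih, hexp₈, hexp₄, zpow_natCast, zpow_natCast,
      eq_div_iff (qPoch_self_ne_zero hw4 _)] at hrec
    rw [eq_div_iff (qPoch_self_ne_zero hw4 _), mul_add_one, qPoch_succ, qPoch_succ, qPoch_succ]
    push_cast
    linear_combination (1 - w ^ (4 * n + 2)) * hrec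

/-- The certificate of the recurrence for `∑' s, baileyTerm q (q ^ 3) (-q) 2 1 n s`, the analogue
of `baileyCertificateOneZero` under the symmetrization `s ↦ -1 - s`. -/
noncomputable def baileyCertificateTwoOne (q : ℂ) (n s : ℤ) : ℂ :=
  thetaTerm (q ^ 3) (-q) s * (q ^ n * (1 - q ^ (-(2 * s)))) *
    invQPoch q (n - 2 * s) * invQPoch q (n + 2 * s)

theorem baileyCertificateTwoOne_add_one_sub (hq₀ : q ≠ 0) (hq : ‖q‖ < 1) (n s : ℤ) :
    baileyCertificateTwoOne q n (s + 1) - baileyCertificateTwoOne q n s =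
      (1 - q ^ n) * (1 - q ^ (2 * n + 1)) * baileyTerm q (q ^ 3) (-q) 2 1 n s +
          (1 - q ^ n) * (1 - q ^ (2 * n + 1)) * baileyTerm q (q ^ 3) (-q) 2 1 n (-1 - s) -
        (baileyTerm q (q ^ 3) (-q) 2 1 (n - 1) s +
          baileyTerm q (q ^ 3) (-q) 2 1 (n - 1) (-1 - s)) := by
  have hz : -q ≠ 0 := neg_ne_zero.2 hq₀
  have hsub₀ := invQPoch_sub_one hq (n - 2 * s)
  have hsub₁ := invQPoch_sub_one hq (n - 2 * s - 1)
  have hadd₁ := invQPoch_sub_one hq (n + 2 * s + 1)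
  have hadd₂ := invQPoch_sub_one hq (n + 2 * s + 2)
  rw [add_sub_cancel_right] at hadd₁
  have hneg : (-q) ^ (-(2 * (s + 1))) = q ^ (-(2 * (s + 1))) := (even_two_mul _).neg.neg_zpow q
  rw [show n + 2 * s + 2 - 1 = n + 2 * s + 1 by ring] at hadd₂
  simp only [baileyCertificateTwoOne, baileyTerm, Nat.cast_one, Nat.cast_ofNat,
    show -1 - s = -(s + 1) by ring,
    show n - 2 * (s + 1) = n - 2 * s - 1 - 1 by ring,
    show n + 2 * (s + 1) = n + 2 * s + 2 by ring,
    show n - 2 * -(s + 1) = n + 2 * s + 2 by ring,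
    show n + 2 * -(s + 1) + 1 = n - 2 * s - 1 by ring,
    show n - 1 - 2 * s = n - 2 * s - 1 by ring,
    show n - 1 + 2 * s + 1 = n + 2 * s by ring,
    show n - 1 - 2 * -(s + 1) = n + 2 * s + 1 by ring,
    show n - 1 + 2 * -(s + 1) + 1 = n - 2 * s - 1 - 1 by ring,
    hadd₁, hadd₂, hsub₁, hsub₀, thetaTerm_neg hz, thetaTerm_add_one (pow_ne_zero 3 hq₀) hz, hneg]
  have hcube (m : ℤ) : (q ^ 3) ^ (2 * m) = (q ^ (2 * m)) ^ 3 := by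
    rw [← zpow_natCast, ← zpow_natCast, zpow_comm]
  have hexp : q ^ (2 * n) = (q ^ n) ^ 2 := by
    rw [← zpow_natCast, ← zpow_mul, mul_comm]; rfl
  simp only [hcube, hexp, mul_add, zpow_neg, zpow_sub₀ hq₀, zpow_add₀ hq₀,
    zpow_add_one₀ (pow_ne_zero 3 hq₀), mul_one, zpow_ofNat]
  have hx := zpow_ne_zero n hq₀
  have hy := zpow_ne_zero (2 * s) hq₀
  generalize q ^ n = x at *
  generalize q ^ (2 * s) = y at *
  field_simp
  ring

theorem tsum_baileyTerm_two_one_sub_one (hq₀ : q ≠ 0) (hq : ‖q‖ < 1) (n : ℤ) :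
    (1 - q ^ n) * (1 - q ^ (2 * n + 1)) * ∑' s, baileyTerm q (q ^ 3) (-q) 2 1 n s =
      ∑' s, baileyTerm q (q ^ 3) (-q) 2 1 (n - 1) s := by
  have hsum (n : ℤ) := summable_baileyTerm q (q ^ 3) (-q) two_ne_zero 1 n
  rw [← tsum_mul_left]
  have hcert : Summable (baileyCertificateTwoOne q n) :=
    summable_mul_invQPoch_mul_invQPoch q _ two_pos n n
  exact tsum_eq_tsum_of_add_reflect_sub_eq_shift_sub ((hsum n).mul_left _) (hsum (n - 1)) hcert (-1)
    fun s => (baileyCertificateTwoOne_add_one_sub hq₀ hq n s).symm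

theorem tsum_baileyTerm_two_one (hq₀ : q ≠ 0) (hq : ‖q‖ < 1) (n : ℕ) :
    ∑' s, baileyTerm q (q ^ 3) (-q) 2 1 n s = qPoch (-q) q n / qPoch q q (2 * n + 1) := by
  induction n with
  | zero => simpa using tsum_baileyTerm_zero q (q ^ 3) (-q) one_lt_two
  | succ n ih =>
    have hrec := tsum_baileyTerm_two_one_sub_one hq₀ hq (n + 1)
    have hcast : (n : ℤ) + 1 = (n + 1 : ℕ) := by push_cast; ring
    have hexp : (2 : ℤ) * (n + 1 : ℕ) + 1 = (2 * n + 3 : ℕ) := by push_cast; ring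
    rw [add_sub_cancel_right, ih, hcast, hexp, zpow_natCast, zpow_natCast,
      eq_div_iff (qPoch_self_ne_zero hq _)] at hrec
    rw [eq_div_iff (qPoch_self_ne_zero hq _), mul_add_one, add_right_comm, qPoch_succ, qPoch_succ,
      qPoch_succ (-q)]
    linear_combination (1 + q ^ (n + 1)) * hrec

end BaileyPairs

/-! ### Rogers–Ramanujan type identities modulo 14 -/

section RogersRamanujan

variable {q : ℂ}

theorem hasSum_qPoch_div_qPoch_two_mul (hq₀ : q ≠ 0) (hq : ‖q‖ < 1) :
    HasSum (fun n : ℕ => q ^ (2 * n ^ 2) * (qPoch q (q ^ 2) n / qPoch (q ^ 2) (q ^ 2) (2 * n)))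
      (Jam q 3 7 / J q 2) := by
  obtain ⟨w, rfl⟩ := IsAlgClosed.exists_pow_nat_eq q two_pos
  have hw₀ : w ≠ 0 := (pow_ne_zero_iff two_ne_zero).1 hq₀
  have hw : ‖w‖ < 1 := by
    rwa [norm_pow, sq_lt_one_iff₀ (norm_nonneg w)] at hq
  have hsum := hasSum_bailey_theta (c := 0) (B := w ^ 7) (y := -w⁻¹) (pow_ne_zero 4 hw₀)
    (norm_pow_lt_one hw four_ne_zero) (pow_ne_zero 3 hw₀) (norm_pow_lt_one hw three_ne_zero)
    (neg_ne_zero.2 (inv_ne_zero hw₀)) one_ne_zero zero_le_one (by ring) (by ring)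
  have hargs : -(-w⁻¹ * w ^ 7) = w ^ 6 ∧ -((-w⁻¹)⁻¹ * w ^ 7) = w ^ 8 := by
    constructor <;> field_simp
  simpa only [tsum_baileyTerm_one_zero hw₀ hw, hargs.1, hargs.2, Jam, J, ← pow_mul, zero_mul,
    add_zero, mul_left_comm 4, ← mul_assoc, Nat.reduceMul, Nat.reduceSub] using hsum

theorem hasSum_qPoch_neg_div_qPoch_two_mul_add_one (hq₀ : q ≠ 0) (hq : ‖q‖ < 1) :
    HasSum (fun n : ℕ => q ^ (n ^ 2 + n) * (qPoch (-q) q n / qPoch q q (2 * n + 1)))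
      (Jam q 4 14 / J q 1) := by
  have hsum := hasSum_bailey_theta (c := 1) (B := q ^ 7) (y := -q ^ 3) hq₀ hq
    (pow_ne_zero 3 hq₀) (norm_pow_lt_one hq three_ne_zero) (neg_ne_zero.2 hq₀) two_ne_zero le_rfl
    (by ring) (by ring)
  have hargs : -(-q ^ 3 * q ^ 7) = q ^ 10 ∧ -((-q ^ 3)⁻¹ * q ^ 7) = q ^ 4 := by
    constructor
    · ring
    · field_simp
  simpa only [tsum_baileyTerm_two_one hq₀ hq, hargs.1, hargs.2, Jam, J, ← pow_mul, one_mul, pow_one,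
    Nat.reduceMul, Nat.reduceSub, mul_comm (qPochInf (q ^ 10) _)] using hsum

end RogersRamanujan

/-! ### Products -/

section Products

variable {q : ℂ} {a m : ℕ}

theorem J_ne_zero (hq : ‖q‖ < 1) (hm : m ≠ 0) : J q m ≠ 0 :=
  qPochInf_ne_zero (norm_pow_lt_one hq hm) (norm_pow_lt_one hq hm)

theorem Jam_ne_zero (hq : ‖q‖ < 1) (ha : a ≠ 0) (ham : a < m) : Jam q a m ≠ 0 := by
  have hm : ‖q ^ m‖ < 1 := norm_pow_lt_one hq (by lia)
  exact mul_ne_zero (mul_ne_zero (qPochInf_ne_zero (norm_pow_lt_one hq ha) hm)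
    (qPochInf_ne_zero (norm_pow_lt_one hq (by lia)) hm)) (qPochInf_ne_zero hm hm)

theorem J_pow (q : ℂ) (k m : ℕ) : J (q ^ k) m = J q (k * m) := by
  simp only [J, ← pow_mul]

theorem Jam_pow (q : ℂ) (k a m : ℕ) : Jam (q ^ k) a m = Jam q (k * a) (k * m) := by
  simp only [Jam, ← pow_mul, Nat.mul_sub]

theorem qPochInf_pow_eq_mul (hq : ‖q‖ < 1) (hm : m ≠ 0) (a : ℕ) :
    qPochInf (q ^ a) (q ^ m) =
      qPochInf (q ^ a) (q ^ (2 * m)) * qPochInf (q ^ (a + m)) (q ^ (2 * m)) := by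
  rw [qPochInf_eq_mul_sq _ (norm_pow_lt_one hq hm), ← pow_add, ← pow_mul, mul_comm m 2]

theorem J_eq_qPochInf_mul (hq : ‖q‖ < 1) (hm : m ≠ 0) :
    J q m = qPochInf (q ^ m) (q ^ (2 * m)) * J q (2 * m) := by
  rw [J, qPochInf_pow_eq_mul hq hm, ← two_mul, J]

theorem J_mul_J_four_mul (hq : ‖q‖ < 1) (hm : m ≠ 0) :
    J q m * J q (4 * m) = Jam q m (4 * m) * J q (2 * m) := by
  have hsplit := qPochInf_pow_eq_mul hq (mul_ne_zero two_ne_zero hm) m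
  have hidx : m + 2 * m = 4 * m - m := by lia
  have hidx' : 2 * (2 * m) = 4 * m := by lia
  rw [hidx', hidx] at hsplit
  rw [J_eq_qPochInf_mul hq hm, hsplit, Jam]
  simp only [J]
  ring

theorem Jam_mul_J_two_mul_sq (hq : ‖q‖ < 1) (hm : m ≠ 0) (ham : a ≤ m) :
    Jam q a m * J q (2 * m) ^ 2 = Jam q a (2 * m) * Jam q (m - a) (2 * m) * J q m := by
  have hidx : m - a + m = 2 * m - a := by lia
  have hidx' : 2 * m - (m - a) = a + m := by lia
  rw [Jam, qPochInf_pow_eq_mul hq hm a, qPochInf_pow_eq_mul hq hm (m - a), hidx, Jam, Jam, hidx']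
  simp only [J]
  ring

theorem qPochInf_pow_mul_qPochInf_neg_pow (hq : ‖q‖ < 1) (hm : m ≠ 0) (a : ℕ) :
    qPochInf (q ^ a) (q ^ m) * qPochInf (-q ^ a) (q ^ m) =
      qPochInf (q ^ (2 * a)) (q ^ (2 * m)) := by
  rw [qPochInf_mul_neg _ (norm_pow_lt_one hq hm), ← pow_mul, ← pow_mul, mul_comm a, mul_comm m]

theorem Jam_neg_mul (hq : ‖q‖ < 1) (ha : Odd a) (hm : Odd m) (ham : a ≤ m) :
    Jam (-q) a m * (Jam q a (2 * m) * J q m * J q (4 * m) ^ 2) =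
      Jam q (m - a) (2 * m) * Jam q (2 * a) (4 * m) * J q (2 * m) ^ 3 := by
  have hm₀ : m ≠ 0 := hm.pos.ne'
  have hfour : 4 * m = 2 * (2 * m) := by lia
  have hsplit (k : ℕ) : qPochInf ((-q) ^ k) ((-q) ^ m) =
      qPochInf ((-q) ^ k) (q ^ (2 * m)) * qPochInf ((-q) ^ (k + m)) (q ^ (2 * m)) := by
    rw [qPochInf_pow_eq_mul (by rwa [norm_neg]) hm₀, (even_two_mul m).neg_pow]
  have hdouble (k : ℕ) : qPochInf (q ^ k) (q ^ (2 * m)) * qPochInf (-q ^ k) (q ^ (2 * m)) =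
      qPochInf (q ^ (2 * k)) (q ^ (4 * m)) := by
    rw [qPochInf_pow_mul_qPochInf_neg_pow hq (by lia), hfour]
  have hJ : J q (2 * m) = qPochInf (q ^ m) (q ^ (2 * m)) * qPochInf (-q ^ m) (q ^ (2 * m)) *
      J q (4 * m) := by
    rw [hdouble, J_eq_qPochInf_mul hq (by lia), hfour]
  have hsub : Even (m - a) := Nat.Odd.sub_odd hm ha
  have hidx₁ : 2 * m - (m - a) = a + m := by lia
  have hidx₂ : 4 * m - 2 * a = 2 * (2 * m - a) := by lia
  have hidx₃ : m - a + m = 2 * m - a := by lia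
  rw [Jam, hsplit, hsplit, hsplit, ha.neg_pow, hm.neg_pow, (ha.add_odd hm).neg_pow, hsub.neg_pow,
    (hsub.add_odd hm).neg_pow, (hm.add_odd hm).neg_pow, Jam, Jam, Jam, hidx₁, hidx₂, hidx₃,
    ← hdouble, ← hdouble, J_eq_qPochInf_mul hq hm₀, ← two_mul, ← J, ← J]
  linear_combination (-J q (2 * m) ^ 3 * J q (4 * m) * qPochInf (q ^ a) (q ^ (2 * m)) *
    qPochInf (-q ^ a) (q ^ (2 * m)) * qPochInf (q ^ (2 * m - a)) (q ^ (2 * m)) *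
    qPochInf (-q ^ (2 * m - a)) (q ^ (2 * m)) * qPochInf (q ^ (m - a)) (q ^ (2 * m)) *
    qPochInf (q ^ (a + m)) (q ^ (2 * m))) * hJ

theorem J_one_mul_J_pow (hq : ‖q‖ < 1) (n : ℕ) :
    J q 1 * J q (2 * (n + 1)) ^ n =
      J q (n + 1) * ∏ k ∈ Finset.range n, Jam q (k + 1) (2 * (n + 1)) := by
  let P (k : ℕ) : ℂ := qPochInf (q ^ k) (q ^ (2 * (n + 1)))
  have hdissect : J q 1 = (∏ k ∈ Finset.range n, P (k + 1)) * P (n + 1) *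
      (∏ k ∈ Finset.range n, P (n + 1 + (k + 1))) * P (2 * (n + 1)) := by
    rw [J, pow_one, qPochInf_eq_prod q hq (k := n + 1 + (n + 1)) (by lia), Finset.prod_range_add,
      Finset.prod_range_succ, Finset.prod_range_succ]
    simp only [P, ← pow_succ', two_mul]
    ring_nf
  have hreflect : ∏ k ∈ Finset.range n, P (n + 1 + (k + 1)) =
      ∏ k ∈ Finset.range n, P (2 * (n + 1) - (k + 1)) := by
    rw [← Finset.prod_range_reflect]
    refine Finset.prod_congr rfl fun k hk => congrArg P ?_
    have := Finset.mem_range.1 hk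
    lia
  rw [hdissect, hreflect, J_eq_qPochInf_mul hq n.add_one_ne_zero]
  simp only [Jam, Finset.prod_mul_distrib, Finset.prod_const, Finset.card_range, J, P]
  ring

theorem Jam_neg_three_seven (hq : ‖q‖ < 1) :
    Jam (-q) 3 7 / J (-q) 2 = J q 14 * J q 28 ^ 5 / (Jam q 2 28 * Jam q 3 28 * Jam q 7 28 *
      Jam q 8 28 * Jam q 11 28 * Jam q 12 28) := by
  have hneg := Jam_neg_mul hq (a := 3) (m := 7) (by decide) (by decide) (by lia)
  have hsplit₄ := Jam_mul_J_two_mul_sq hq (a := 4) (m := 14) (by lia) (by lia)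
  have hsplit₃ := Jam_mul_J_two_mul_sq hq (a := 3) (m := 14) (by lia) (by lia)
  have hsplit₇ := J_mul_J_four_mul hq (m := 7) (by lia)
  have heven := J_one_mul_J_pow (norm_pow_lt_one hq two_ne_zero) 6
  simp only [Finset.prod_range_succ, Finset.prod_range_zero, J_pow, Jam_pow, Nat.reduceAdd,
    Nat.reduceMul, Nat.reduceSub, one_mul, mul_one] at hneg hsplit₄ hsplit₃ hsplit₇ heven
  have hJneg : J (-q) 2 = J q 2 := by rw [J, J, neg_sq]
  have hJ₂ := J_ne_zero hq two_ne_zero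
  have hJ₁₄ := J_ne_zero hq (m := 14) (by lia)
  have hJ₂₈ := J_ne_zero hq (m := 28) (by lia)
  have hJam {a : ℕ} (ha : a ∈ Finset.Ioo 0 28) : Jam q a 28 ≠ 0 :=
    Jam_ne_zero hq (Finset.mem_Ioo.1 ha).1.ne' (Finset.mem_Ioo.1 ha).2
  rw [hJneg, div_eq_div_iff hJ₂ (by simp [hJam])]
  have hodd : Jam (-q) 3 7 * (Jam q 3 28 * Jam q 7 28 * Jam q 11 28) * J q 28 =
      Jam q 4 28 * Jam q 6 28 * Jam q 10 28 * J q 14 ^ 2 := by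
    refine mul_right_cancel₀ (mul_ne_zero (pow_ne_zero 2 hJ₁₄) hJ₂₈) ?_
    calc _ = Jam (-q) 3 7 * (Jam q 3 28 * Jam q 11 28 * J q 14) * (Jam q 7 28 * J q 14) *
          J q 28 ^ 2 := by ring
      _ = Jam (-q) 3 7 * (Jam q 3 14 * J q 7 * J q 28 ^ 2) * J q 28 ^ 3 := by
        rw [← hsplit₃, ← hsplit₇]; ring
      _ = (Jam q 4 14 * J q 28 ^ 2) * Jam q 6 28 * J q 14 ^ 3 * J q 28 := by rw [hneg]; ring
      _ = _ := by rw [hsplit₄]; ring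
  refine mul_right_cancel₀ hJ₂₈ ?_
  linear_combination Jam q 2 28 * Jam q 8 28 * Jam q 12 28 * hodd - J q 14 * heven

theorem J_one_mul_J_four_mul_qPochInf_neg (hq : ‖q‖ < 1) :
    qPochInf (-q) (q ^ 2) * (J q 1 * J q 4) = J q 2 ^ 2 := by
  have hdouble := qPochInf_pow_mul_qPochInf_neg_pow hq two_ne_zero 1
  have hJ₁ := J_eq_qPochInf_mul hq one_ne_zero
  have hJ₂ := J_eq_qPochInf_mul hq two_ne_zero
  simp only [pow_one, mul_one, Nat.reduceMul] at hdouble hJ₁ hJ₂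
  rw [hJ₁]
  linear_combination J q 2 * J q 4 * hdouble - J q 2 * hJ₂

theorem qPochInf_neg_sq_mul_J_two (hq : ‖q‖ < 1) :
    qPochInf (-q ^ 2) (q ^ 2) * J q 2 = J q 4 := by
  rw [J, mul_comm, qPochInf_pow_mul_qPochInf_neg_pow hq two_ne_zero, J]

end Products

/-! ### The quadruple sum -/

section QuadrupleSum

variable {q : ℂ}

/-- The summand of the quadruple series, as a function of its four indices. -/
noncomputable def quadTerm (q : ℂ) (i j k l : ℕ) : ℂ :=
  q ^ ((i : ℤ) ^ 2 + (j : ℤ) ^ 2 + (k : ℤ) ^ 2 + (l : ℤ) ^ 2 + (i : ℤ) * (l : ℤ) -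
      (j : ℤ) * (l : ℤ) - (k : ℤ) * (l : ℤ)) /
    (qPoch (q ^ 2) (q ^ 2) i * qPoch (q ^ 2) (q ^ 2) j * qPoch (q ^ 2) (q ^ 2) k *
      qPoch (q ^ 2) (q ^ 2) l)

/-- The sum of `quadTerm q i j k l` over `i`, `j` and `k` for a fixed `l`, as given by Euler's
theorem. -/
noncomputable def quadInner (q : ℂ) (l : ℕ) : ℂ :=
  q ^ l ^ 2 / qPoch (q ^ 2) (q ^ 2) l *
    (qPochInf (-q ^ (l + 1)) (q ^ 2) * qPochInf (-q / q ^ l) (q ^ 2) ^ 2)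

theorem add_le_four_mul_quadForm (i j k l : ℕ) :
    (i + (j + (k + l)) : ℤ) ≤ 4 * ((i : ℤ) ^ 2 + (j : ℤ) ^ 2 + (k : ℤ) ^ 2 + (l : ℤ) ^ 2 +
      (i : ℤ) * (l : ℤ) - (j : ℤ) * (l : ℤ) - (k : ℤ) * (l : ℤ)) := by
  have le_sq (n : ℕ) : (n : ℤ) ≤ (n : ℤ) ^ 2 := mod_cast Nat.le_self_pow two_ne_zero n
  have hil : 0 ≤ (i : ℤ) * l := by positivity
  nlinarith [le_sq i, le_sq j, le_sq k, le_sq l, sq_nonneg (3 * (j : ℤ) - 2 * l),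
    sq_nonneg (3 * (k : ℤ) - 2 * l), sq_nonneg (i : ℤ), sq_nonneg (l : ℤ)]

theorem exists_norm_quadTerm_le (hq₀ : q ≠ 0) (hq : ‖q‖ < 1) :
    ∃ K s : ℝ, 0 ≤ s ∧ s < 1 ∧
      ∀ i j k l, ‖quadTerm q i j k l‖ ≤ K * (s ^ i * (s ^ j * (s ^ k * s ^ l))) := by
  obtain ⟨K, hK⟩ := exists_norm_invQPoch_le (norm_pow_lt_one hq two_ne_zero)
  obtain ⟨s, hs₀, hs⟩ : ∃ s : ℝ, 0 < s ∧ s ^ 4 = ‖q‖ :=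
    ⟨‖q‖ ^ (4⁻¹ : ℝ), Real.rpow_pos_of_pos (norm_pos_iff.2 hq₀) _,
      Real.rpow_inv_natCast_pow (norm_nonneg q) four_ne_zero⟩
  have hs₁ : s < 1 := by rwa [← hs, pow_lt_one_iff_of_nonneg hs₀.le four_ne_zero] at hq
  refine ⟨K ^ 4, s, hs₀.le, hs₁, fun i j k l => ?_⟩
  have hpow := zpow_le_zpow_right_of_le_one₀ hs₀ hs₁.le (add_le_four_mul_quadForm i j k l)
  simp only [zpow_mul, zpow_add₀ hs₀.ne', zpow_natCast] at hpow
  have hs' : s ^ (4 : ℤ) = ‖q‖ := mod_cast hs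
  rw [quadTerm, div_eq_mul_inv, mul_inv, mul_inv, mul_inv, ← invQPoch_natCast, ← invQPoch_natCast,
    ← invQPoch_natCast, ← invQPoch_natCast, norm_mul, norm_mul, norm_mul, norm_mul, norm_zpow,
    ← hs']
  have hK₀ : 0 ≤ K := (norm_nonneg _).trans (hK 0)
  calc _ ≤ s ^ i * (s ^ j * (s ^ k * s ^ l)) * (K * K * K * K) := by gcongr <;> apply hK
    _ = _ := by ring

theorem summable_quadTerm (hq₀ : q ≠ 0) (hq : ‖q‖ < 1) :
    Summable fun p : ℕ × ℕ × ℕ × ℕ => quadTerm q p.1 p.2.1 p.2.2.1 p.2.2.2 := by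
  obtain ⟨K, s, hs₀, hs₁, hbound⟩ := exists_norm_quadTerm_le hq₀ hq
  have hs := (summable_geometric_of_lt_one hs₀ hs₁).hasSum
  exact .of_norm_bounded ((hasSum_mul_prod hs (hasSum_mul_prod hs (hasSum_mul_prod hs hs))).summable
    |>.mul_left K) fun p => hbound p.1 p.2.1 p.2.2.1 p.2.2.2

theorem hasSum_quadTerm_inner (hq₀ : q ≠ 0) (hq : ‖q‖ < 1) (l : ℕ) :
    HasSum (fun p : ℕ × ℕ × ℕ => quadTerm q p.1 p.2.1 p.2.2 l) (quadInner q l) := by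
  have hi := hasSum_euler_sq hq (q ^ l)
  have hj := hasSum_euler_sq hq (q ^ l)⁻¹
  have hz : -(q ^ l * q) = -q ^ (l + 1) := by rw [pow_succ]
  have hz' : -((q ^ l)⁻¹ * q) = -q / q ^ l := by rw [mul_comm, ← div_eq_mul_inv, neg_div]
  rw [hz] at hi
  rw [hz'] at hj
  have hprod := (hasSum_mul_prod hi (hasSum_mul_prod hj hj)).mul_left
    (q ^ l ^ 2 / qPoch (q ^ 2) (q ^ 2) l)
  rw [← sq] at hprod
  refine hprod.congr_fun fun p => ?_
  rw [quadTerm, zpow_sub₀ hq₀, zpow_sub₀ hq₀]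
  simp only [zpow_add₀ hq₀]
  norm_cast
  rw [div_eq_mul_inv, mul_inv, mul_inv, mul_inv]
  ring

theorem hasSum_quadInner (hq₀ : q ≠ 0) (hq : ‖q‖ < 1) :
    HasSum (quadInner q)
      (∑' p : ℕ × ℕ × ℕ × ℕ, quadTerm q p.1 p.2.1 p.2.2.1 p.2.2.2) := by
  let e : ℕ × ℕ × ℕ × ℕ ≃ ℕ × ℕ × ℕ × ℕ :=
    { toFun p := (p.2.1, p.2.2.1, p.2.2.2, p.1)
      invFun p := (p.2.2.2, p.1, p.2.1, p.2.2.1) }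
  exact (e.hasSum_iff.2 (summable_quadTerm hq₀ hq).hasSum).prod_fiberwise
    (hasSum_quadTerm_inner hq₀ hq)

theorem qPochInf_sq_reflect (hq₀ : q ≠ 0) (hq : ‖q‖ < 1) {a : ℂ} (ha : a ≠ 0) (m : ℕ) :
    qPochInf (a / q ^ (2 * m)) (q ^ 2) =
      (-a) ^ m / q ^ (m * (m + 1)) * qPoch (q ^ 2 / a) (q ^ 2) m * qPochInf a (q ^ 2) := by
  rw [qPochInf_eq_qPoch_mul _ (norm_pow_lt_one hq two_ne_zero) m, qPoch_sq_reflect hq₀ ha,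
    ← pow_mul, div_mul_cancel₀ _ (pow_ne_zero _ hq₀)]

theorem quadInner_two_mul (hq₀ : q ≠ 0) (hq : ‖q‖ < 1) (m : ℕ) :
    quadInner q (2 * m) = qPochInf (-q) (q ^ 2) ^ 3 *
      (q ^ (2 * m ^ 2) * (qPoch (-q) (q ^ 2) m / qPoch (q ^ 2) (q ^ 2) (2 * m))) := by
  have hsplit := qPochInf_eq_qPoch_mul (-q) (norm_pow_lt_one hq two_ne_zero) m
  have hshift : -q * (q ^ 2) ^ m = -q ^ (2 * m + 1) := by ring
  have hself : q ^ 2 / -q = -q := by field_simp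
  rw [hshift] at hsplit
  rw [quadInner, qPochInf_sq_reflect hq₀ hq (neg_ne_zero.2 hq₀), hself, neg_neg, pow_succ _ 2]
  nth_rw 3 [hsplit]
  field_simp
  ring

theorem quadInner_two_mul_add_one (hq₀ : q ≠ 0) (hq : ‖q‖ < 1) (m : ℕ) :
    quadInner q (2 * m + 1) = 4 * q * qPochInf (-q ^ 2) (q ^ 2) ^ 3 *
      ((q ^ 2) ^ (m ^ 2 + m) *
        (qPoch (-q ^ 2) (q ^ 2) m / qPoch (q ^ 2) (q ^ 2) (2 * m + 1))) := by
  have hq2 := norm_pow_lt_one hq two_ne_zero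
  have hsplit := qPochInf_eq_qPoch_mul (-q ^ 2) hq2 m
  have hshift : -q ^ 2 * (q ^ 2) ^ m = -q ^ (2 * m + 1 + 1) := by ring
  have hone : qPochInf (-1) (q ^ 2) = 2 * qPochInf (-q ^ 2) (q ^ 2) := by
    rw [qPochInf_eq_qPoch_mul (-1) hq2 1, qPoch_succ, qPoch_zero]
    norm_num
  have hbase : -q / q ^ (2 * m + 1) = -1 / q ^ (2 * m) := by
    field_simp
    ring
  rw [hshift] at hsplit
  rw [quadInner, hbase, qPochInf_sq_reflect hq₀ hq (by norm_num), hone, neg_neg, one_pow,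
    div_neg, div_one, pow_succ _ 2]
  nth_rw 3 [hsplit]
  field_simp
  ring

theorem hasSum_quadInner_two_mul (hq₀ : q ≠ 0) (hq : ‖q‖ < 1) :
    HasSum (fun m => quadInner q (2 * m))
      (qPochInf (-q) (q ^ 2) ^ 3 * (Jam (-q) 3 7 / J (-q) 2)) := by
  have hsum := hasSum_qPoch_div_qPoch_two_mul (neg_ne_zero.2 hq₀) (by rwa [norm_neg])
  refine (hsum.mul_left _).congr_fun fun m => ?_
  rw [quadInner_two_mul hq₀ hq, neg_sq, (even_two_mul _).neg_pow]

theorem hasSum_quadInner_two_mul_add_one (hq₀ : q ≠ 0) (hq : ‖q‖ < 1) :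
    HasSum (fun m => quadInner q (2 * m + 1))
      (4 * q * qPochInf (-q ^ 2) (q ^ 2) ^ 3 * (Jam q 8 28 / J q 2)) := by
  have hsum := hasSum_qPoch_neg_div_qPoch_two_mul_add_one (pow_ne_zero 2 hq₀)
    (norm_pow_lt_one hq two_ne_zero)
  rw [J_pow, Jam_pow] at hsum
  exact (hsum.mul_left _).congr_fun (quadInner_two_mul_add_one hq₀ hq)

end QuadrupleSum

theorem stmt_14 (q : ℂ) (h0 : 0 < ‖q‖) (h1 : ‖q‖ < 1) :
    (∑' p : ℕ × ℕ × ℕ × ℕ,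
      (fun (i j k l : ℕ) =>
        q ^ (((i:ℤ)^2 + (j:ℤ)^2 + (k:ℤ)^2 + (l:ℤ)^2 + (i:ℤ)*(l:ℤ) - (j:ℤ)*(l:ℤ) - (k:ℤ)*(l:ℤ)) : ℤ) /
          (qPoch (q ^ 2) (q ^ 2) i * qPoch (q ^ 2) (q ^ 2) j * qPoch (q ^ 2) (q ^ 2) k * qPoch (q ^ 2) (q ^ 2) l))
        p.1 p.2.1 p.2.2.1 p.2.2.2)
    = (J q 2)^6 * J q 14 * (J q 28)^5 /
        ((J q 1)^3 * (J q 4)^3 * Jam q 2 28 * Jam q 3 28 * Jam q 7 28 *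
          Jam q 8 28 * Jam q 11 28 * Jam q 12 28)
      + 4 * q * (J q 4)^3 * Jam q 8 28 / (J q 2)^4 := by
  have hq₀ : q ≠ 0 := norm_pos_iff.1 h0
  have hJ {m : ℕ} (hm : m ≠ 0) : J q m ≠ 0 := J_ne_zero h1 hm
  have hJ₂ := hJ two_ne_zero
  have heven : qPochInf (-q) (q ^ 2) = J q 2 ^ 2 / (J q 1 * J q 4) :=
    eq_div_of_mul_eq (mul_ne_zero (hJ one_ne_zero) (hJ four_ne_zero))
      (J_one_mul_J_four_mul_qPochInf_neg h1)
  have hodd : qPochInf (-q ^ 2) (q ^ 2) = J q 4 / J q 2 :=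
    eq_div_of_mul_eq hJ₂ (qPochInf_neg_sq_mul_J_two h1)
  have hsum := (hasSum_quadInner_two_mul hq₀ h1).even_add_odd
    (hasSum_quadInner_two_mul_add_one hq₀ h1)
  refine ((hasSum_quadInner hq₀ h1).unique hsum).trans ?_
  rw [heven, hodd, Jam_neg_three_seven h1, div_pow, div_mul_div_comm]
  congr 1
  · congr 1 <;> ring
  · field_simp
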